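/- Let (x, y) ∈ E × E with w₁·δ < dist(x, ∂E) and w₁·δ < dist(y, ∂E). If 8·β·d < 1, then ĥₙ(x, y) → h(x, y) = p(x) q(x, y) almost surely as n → ∞. -/

import Mathlib

open MeasureTheory ProbabilityTheory Filter

noncomputable def iterK {S : Type*} [MeasurableSpace S] (R : S → Measure S) : ℕ → S → Measure S
  | 0, y => Measure.dirac y
  | n+1, y => (iterK R n y).bind R

theorem ae_tendsto_zero_of_summable {Ω : Type*} [MeasurableSpace Ω] (P : Measure Ω)
    (f : ℕ → Ω → ℝ) (hm : ∀ k, Measurable (f k)) (h0 : ∀ k ω, 0 ≤ f k ω)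
    (hi : ∀ k, Integrable (f k) P) (hs : Summable fun k => ∫ ω, f k ω ∂P) :
    ∀ᵐ ω ∂P, Tendsto (fun k => f k ω) atTop (nhds 0) := by
  have h1 : ∫⁻ ω, ∑' k, ENNReal.ofReal (f k ω) ∂P ≠ ⊤ := by
    rw [lintegral_tsum (fun k => (hm k).ennreal_ofReal.aemeasurable)]
    have : ∀ k, ∫⁻ ω, ENNReal.ofReal (f k ω) ∂P = ENNReal.ofReal (∫ ω, f k ω ∂P) := fun k =>
      (ofReal_integral_eq_lintegral_ofReal (hi k) (ae_of_all _ (h0 k))).symm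
    simp_rw [this]
    exact hs.tsum_ofReal_ne_top
  have h2 := ae_lt_top (Measurable.ennreal_tsum fun k => (hm k).ennreal_ofReal) h1
  filter_upwards [h2] with ω hω
  have h3 := ENNReal.tendsto_atTop_zero_of_tsum_ne_top hω.ne
  have h4 := (ENNReal.tendsto_toReal (by simp : (0:ENNReal) ≠ ⊤)).comp h3
  simpa [Function.comp_def, ENNReal.toReal_ofReal, h0] using h4

theorem slln_aux {Ω : Type*} [MeasurableSpace Ω] (P : Measure Ω) [IsProbabilityMeasure P]
    (Y : ℕ → Ω → ℝ) (hm : ∀ i, Measurable (Y i)) (h0 : ∀ i ω, 0 ≤ Y i ω)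
    (hb : ∀ i, ∃ M, ∀ ω, Y i ω ≤ M) (C s θ L : ℝ) (hC : 0 ≤ C) (hs0 : 0 ≤ s) (hs : s < 1 / 2)
    (hθ0 : 0 ≤ θ) (hθ1 : θ < 1)
    (hcov : ∀ m n, m ≤ n → |∫ ω, Y m ω * Y n ω ∂P - (∫ ω, Y m ω ∂P) * (∫ ω, Y n ω ∂P)| ≤
      C * ((n : ℝ) + 1) ^ s * θ ^ (n - m))
    (hL : Tendsto (fun n => ∫ ω, Y n ω ∂P) atTop (nhds L)) :
    ∀ᵐ ω ∂P, Tendsto (fun n : ℕ => (∑ i ∈ Finset.range n, Y i ω) / n) atTop (nhds L) := by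
  have hLp : ∀ i, MemLp (Y i) 2 P := by
    intro i
    obtain ⟨M, hM⟩ := hb i
    refine MemLp.of_bound (hm i).aestronglyMeasurable M (ae_of_all _ fun ω => ?_)
    rw [Real.norm_eq_abs, abs_of_nonneg (h0 i ω)]; exact hM ω
  have hint : ∀ i, Integrable (Y i) P := fun i => (hLp i).integrable (by norm_num)
  -- summable two-sided geometric
  have hsum : Summable (fun z : ℤ => θ ^ z.natAbs) := by
    rw [summable_int_iff_summable_nat_and_neg]
    simp [summable_geometric_of_lt_one hθ0 hθ1]
  set T := ∑' z : ℤ, θ ^ z.natAbs with hT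
  have hT0 : 0 ≤ T := tsum_nonneg fun z => by positivity
  have hrow : ∀ (n i : ℕ), ∑ j ∈ Finset.range n, θ ^ ((j : ℤ) - i).natAbs ≤ T := by
    intro n i
    have hinj : Function.Injective (fun j : ℕ => (j : ℤ) - i) := fun a b h => by
      simpa using h
    have hs' : Summable (fun j : ℕ => θ ^ ((j : ℤ) - i).natAbs) := hsum.comp_injective hinj
    exact (hs'.sum_le_tsum _ (fun j _ => by positivity)).trans
      (tsum_comp_le_tsum_of_inj hsum (fun z => by positivity) hinj)
  have hc : ∀ n i j, i < n → j < n → cov[Y i, Y j; P] ≤ C * (n : ℝ) ^ s * θ ^ ((j : ℤ) - i).natAbs := by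
    intro n i j hi hj
    wlog hij : i ≤ j generalizing i j
    · rw [covariance_comm]
      have := this j i hj hi (by omega)
      rwa [show ((j : ℤ) - i).natAbs = ((i : ℤ) - j).natAbs by omega]
    rw [covariance_eq_sub (hLp i) (hLp j)]
    have h1 := (le_abs_self _).trans (hcov i j hij)
    rw [show ((j : ℤ) - i).natAbs = j - i by omega]
    refine le_trans h1 ?_
    have : (j : ℝ) + 1 ≤ n := by exact_mod_cast hj
    gcongr
  have hvar : ∀ n : ℕ, Var[fun ω => ∑ i ∈ Finset.range n, Y i ω; P] ≤ C * T * (n : ℝ) ^ (1 + s) := by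
    intro n
    rw [variance_fun_sum' (fun i _ => hLp i)]
    calc _ ≤ ∑ i ∈ Finset.range n, ∑ j ∈ Finset.range n, C * (n : ℝ) ^ s * θ ^ ((j : ℤ) - i).natAbs := by
          refine Finset.sum_le_sum fun i hi => Finset.sum_le_sum fun j hj => ?_
          exact hc n i j (Finset.mem_range.1 hi) (Finset.mem_range.1 hj)
      _ ≤ ∑ i ∈ Finset.range n, C * (n : ℝ) ^ s * T := by
          refine Finset.sum_le_sum fun i hi => ?_
          rw [← Finset.mul_sum]
          gcongr
          exact hrow n i
      _ = C * T * (n : ℝ) ^ (1 + s) := by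
          rw [Finset.sum_const, Finset.card_range, nsmul_eq_mul, Real.rpow_add_of_nonneg (by positivity) (by norm_num) hs0, Real.rpow_one]
          ring
  set S : ℕ → Ω → ℝ := fun n ω => ∑ i ∈ Finset.range n, Y i ω with hS
  have hSLp : ∀ n, MemLp (S n) 2 P := fun n => memLp_finsetSum _ fun i _ => hLp i
  have hSm : ∀ n, Measurable (S n) := fun n => Finset.measurable_fun_sum _ fun i _ => hm i
  set c : ℕ → ℕ := fun k => (k + 1) ^ 2 with hcdef
  have hc0 : ∀ k, (0 : ℝ) < c k := fun k => by simp only [hcdef]; positivity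
  have hae := ae_tendsto_zero_of_summable P
    (fun k ω => ((S (c k) ω - ∫ ω, S (c k) ω ∂P) / c k) ^ 2)
    (fun k => by have := hSm (c k); fun_prop) (fun k ω => sq_nonneg _)
    (fun k => by
      have := (((hSLp (c k)).sub (memLp_const (∫ ω, S (c k) ω ∂P))).integrable_sq).div_const ((c k : ℝ)^2)
      simpa [div_pow] using this)
    (by
      have hsm : Summable (fun k : ℕ => C * T * ((k : ℝ) + 1) ^ (2 * (s - 1))) := by
        apply Summable.mul_left
        have := (summable_nat_add_iff 1).2 (Real.summable_nat_rpow.2 (show 2 * (s - 1) < -1 by linarith))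
        simpa using this
      refine Summable.of_nonneg_of_le (fun k => integral_nonneg fun ω => sq_nonneg _) (fun k => ?_) hsm
      have h1 := hvar (c k)
      rw [variance_eq_integral (hSm (c k)).aemeasurable] at h1
      simp_rw [div_pow]
      rw [integral_div, div_le_iff₀ (by have := hc0 k; positivity)]
      refine h1.trans (le_of_eq ?_)
      have hk : (0:ℝ) < (k : ℝ) + 1 := by positivity
      simp only [hcdef]
      push_cast
      rw [← Real.rpow_natCast, ← Real.rpow_natCast, ← Real.rpow_mul hk.le, ← Real.rpow_mul hk.le, mul_assoc (C * T),
        ← Real.rpow_add hk]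
      congr 2
      push_cast
      ring)
  have hctop : Tendsto c atTop atTop := by
    refine tendsto_atTop_mono (fun k => ?_) tendsto_id
    simp only [hcdef, id]; nlinarith
  have hmean : Tendsto (fun k => (∫ ω, S (c k) ω ∂P) / c k) atTop (nhds L) := by
    have h1 := hL.cesaro.comp hctop
    refine h1.congr fun k => ?_
    simp only [Function.comp, hS]
    rw [integral_finset_sum _ fun i _ => hint i]
    ring
  filter_upwards [hae] with ω hω
  refine tendsto_div_of_monotone_of_exists_subseq_tendsto_div _ L ?_ ?_
  · intro a b hab
    exact Finset.sum_le_sum_of_subset_of_nonneg (Finset.range_mono hab) fun i _ _ => h0 i ω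
  · intro a ha
    refine ⟨c, ?_, hctop, ?_⟩
    · have h1 : Tendsto (fun k : ℕ => (((k + 2 : ℕ) : ℝ) / ((k + 1 : ℕ) : ℝ)) ^ 2) atTop (nhds 1) := by
        have h2 : Tendsto (fun k : ℕ => 1 + 1 / ((k : ℝ) + 1)) atTop (nhds (1 + 0)) :=
          tendsto_const_nhds.add tendsto_one_div_add_atTop_nhds_zero_nat
        have h3 := h2.pow 2
        simp only [add_zero, one_pow] at h3
        refine h3.congr fun k => ?_
        push_cast
        congr 1
        field_simp
        ring
      filter_upwards [h1.eventually (gt_mem_nhds ha)] with k hk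
      rw [div_pow, div_lt_iff₀ (by positivity)] at hk
      simp only [hcdef]
      push_cast at hk ⊢
      rw [show (k:ℝ) + 1 + 1 = k + 2 by ring]
      exact hk.le
    · have h1 : Tendsto (fun k => (S (c k) ω - ∫ ω, S (c k) ω ∂P) / c k) atTop (nhds 0) := by
        have := hω.sqrt
        simp only [Real.sqrt_sq_eq_abs, Real.sqrt_zero] at this
        exact (tendsto_zero_iff_abs_tendsto_zero _).2 this
      have h2 := h1.add hmean
      rw [zero_add] at h2
      refine h2.congr fun k => ?_
      rw [← add_div, sub_add_cancel]

theorem ball_subset_of_infDist {V : Type*} [NormedAddCommGroup V] [NormedSpace ℝ V] (E : Set V)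
    (hE : IsOpen E) (x : V) (hx : x ∈ E) (a : ℝ) (ha : 0 < a)
    (h : a < Metric.infDist x (frontier E)) : Metric.ball x a ⊆ E := by
  refine (convex_ball x a).isPreconnected.subset_of_closure_inter_subset hE
    ⟨x, Metric.mem_ball_self ha, hx⟩ ?_
  rintro z ⟨hz1, hz2⟩
  by_contra hz
  have hf : z ∈ frontier E := by rw [hE.frontier_eq]; exact ⟨hz1, hz⟩
  have := Metric.infDist_le_dist_of_mem (x := x) hf
  rw [Metric.mem_ball, dist_comm] at hz2
  linarith

theorem tendsto_integral_of_setwise {S : Type*} [MeasurableSpace S] (ν : ℕ → Measure S)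
    (π : Measure S) [∀ n, IsProbabilityMeasure (ν n)] [IsProbabilityMeasure π]
    (h : ∀ B, MeasurableSet B → Tendsto (fun n => (ν n).real B) atTop (nhds (π.real B)))
    (g : S → ℝ) (hg : Measurable g) (h0 : ∀ u, 0 ≤ g u) (M : ℝ) (hM : ∀ u, g u ≤ M) :
    Tendsto (fun n => ∫ u, g u ∂(ν n)) atTop (nhds (∫ u, g u ∂π)) := by
  have hi : ∀ (m : Measure S) [IsProbabilityMeasure m], Integrable g m := fun m _ =>
    Integrable.of_bound hg.aestronglyMeasurable M
      (ae_of_all _ fun u => by rw [Real.norm_eq_abs, abs_of_nonneg (h0 u)]; exact hM u)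
  have e : ∀ (m : Measure S) [IsProbabilityMeasure m],
      ∫ u, g u ∂m = ∫ t in Set.Ioc 0 M, m.real {a | t ≤ g a} := fun m _ =>
    (hi m).integral_eq_integral_Ioc_meas_le (ae_of_all _ h0) (ae_of_all _ hM)
  simp_rw [e]
  refine tendsto_integral_of_dominated_convergence (fun _ => 1) (fun n => ?_) ?_ (fun n => ?_) ?_
  · have : Antitone (fun t : ℝ => (ν n).real {a | t ≤ g a}) := fun s t hst =>
      measureReal_mono (fun a ha => le_trans hst ha)
    exact this.measurable.aestronglyMeasurable
  · exact integrable_const _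
  · refine ae_of_all _ fun t => ?_
    rw [Real.norm_eq_abs, abs_of_nonneg measureReal_nonneg]
    exact measureReal_le_one
  · exact ae_of_all _ fun t => h _ (measurableSet_le measurable_const hg)

theorem measurable_iterK {S : Type*} [MeasurableSpace S] (R : S → Measure S) (hR : Measurable R)
    (n : ℕ) : Measurable (iterK R n) := by
  induction n with
  | zero => exact Measure.measurable_dirac
  | succ n ih => exact (Measure.measurable_bind' hR).comp ih

/-- One-step Markov property in expectation. -/
theorem markov_step {Ω S : Type*} [MeasurableSpace Ω] [MeasurableSpace S] (P : Measure Ω)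
    [IsProbabilityMeasure P] (Zm : ℕ → Ω → S) (hZm : ∀ n, Measurable (Zm n))
    (R : S → Measure S)
    (hMarkov : ∀ n, 1 ≤ n → ∀ g : S → ℝ, Measurable g → (∃ C, ∀ u, |g u| ≤ C) →
      P[fun ω => g (Zm (n+1) ω)|⨆ i : Fin n, MeasurableSpace.comap (Zm (i.1+1)) inferInstance]
        =ᵐ[P] fun ω => ∫ u, g u ∂(R (Zm n ω)))
    (n : ℕ) (hn : 1 ≤ n) (g : S → ℝ) (hg : Measurable g) (hb : ∃ C, ∀ u, |g u| ≤ C) :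
    ∫ ω, g (Zm (n+1) ω) ∂P = ∫ ω, (∫ u, g u ∂(R (Zm n ω))) ∂P := by
  rw [← integral_congr_ae (hMarkov n hn g hg hb), integral_condExp]
  exact iSup_le fun i => (hZm _).comap_le

theorem law_step {Ω S : Type*} [MeasurableSpace Ω] [MeasurableSpace S] (P : Measure Ω)
    [IsProbabilityMeasure P] (Zm : ℕ → Ω → S) (hZm : ∀ n, Measurable (Zm n))
    (R : S → Measure S) (hRm : Measurable R) (hRp : ∀ ξ, IsProbabilityMeasure (R ξ))
    (hstep : ∀ n, 1 ≤ n → ∀ g : S → ℝ, Measurable g → (∃ C, ∀ u, |g u| ≤ C) →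
      ∫ ω, g (Zm (n+1) ω) ∂P = ∫ ω, (∫ u, g u ∂(R (Zm n ω))) ∂P) (n : ℕ) :
    P.map (Zm (n+1)) = (P.map (Zm 1)).bind (iterK R n) := by
  induction n with
  | zero =>
    have : iterK R 0 = Measure.dirac := rfl
    rw [this, Measure.bind_dirac]
  | succ n ih =>
    have h1 : P.map (Zm (n+2)) = (P.map (Zm (n+1))).bind R := by
      have hp1 : IsProbabilityMeasure (P.map (Zm (n+2))) := Measure.isProbabilityMeasure_map (hZm _).aemeasurable
      ext B hB
      rw [Measure.bind_apply hB hRm.aemeasurable, lintegral_map (f := fun a => R a B) ((Measure.measurable_coe hB).comp hRm) (hZm _)]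
      have h2 := hstep (n+1) (by omega) (B.indicator 1) (measurable_one.indicator hB)
        ⟨1, fun u => by by_cases h : u ∈ B <;> simp [h]⟩
      have h3 : ∫ ω, B.indicator (1 : S → ℝ) (Zm (n+1+1) ω) ∂P = (P.map (Zm (n+2))).real B := by
        rw [← integral_map (f := B.indicator (1 : S → ℝ)) (hZm _).aemeasurable (measurable_one.indicator hB).aestronglyMeasurable,
          integral_indicator_one hB]
      rw [h3] at h2
      simp_rw [integral_indicator_one hB] at h2
      rw [← ofReal_measureReal (measure_ne_top _ _), h2, ofReal_integral_eq_lintegral_ofReal]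
      · refine lintegral_congr fun ω => ?_
        rw [ofReal_measureReal (measure_ne_top _ _)]
      · refine Integrable.of_bound ?_ 1 (ae_of_all _ fun ω => ?_)
        · exact (((Measure.measurable_coe hB).comp hRm).comp (hZm (n+1))).ennreal_toReal.aestronglyMeasurable
        · rw [Real.norm_eq_abs, abs_of_nonneg measureReal_nonneg]; exact measureReal_le_one
      · exact ae_of_all _ fun ω => measureReal_nonneg
    rw [h1, ih, Measure.bind_bind (measurable_iterK R hRm n).aemeasurable hRm.aemeasurable]
    rfl

theorem law_tendsto {Ω S : Type*} [MeasurableSpace Ω] [MeasurableSpace S] (P : Measure Ω)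
    [IsProbabilityMeasure P] (Zm : ℕ → Ω → S) (hZm : ∀ n, Measurable (Zm n))
    (R : S → Measure S) (hRm : Measurable R)
    (hRp : ∀ ξ, IsProbabilityMeasure (R ξ)) (E : Set S) (hmem : ∀ ω, Zm 1 ω ∈ E)
    (hlaw : ∀ n, P.map (Zm (n+1)) = (P.map (Zm 1)).bind (iterK R n))
    (π : Measure S) [IsProbabilityMeasure π] (κ ρ : ℝ) (hκ : 0 < κ) (hρ : 1 < ρ)
    (hTV : ∀ n : ℕ, 1 ≤ n → ∀ ξ ∈ E, ∀ B : Set S, MeasurableSet B →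
      |(iterK R n ξ B).toReal - (π B).toReal| ≤ κ * ρ ^ (-(n:ℝ)))
    (g : S → ℝ) (hg : Measurable g) (h0 : ∀ u, 0 ≤ g u) (M : ℝ) (hM : ∀ u, g u ≤ M) :
    Tendsto (fun n => ∫ ω, g (Zm (n+1) ω) ∂P) atTop (nhds (∫ u, g u ∂π)) := by
  have hp : ∀ n, IsProbabilityMeasure (P.map (Zm (n+1))) := fun n =>
    Measure.isProbabilityMeasure_map (hZm _).aemeasurable
  have hik : ∀ n ξ, IsProbabilityMeasure (iterK R n ξ) := by
    intro n ξ
    induction n with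
    | zero => exact Measure.dirac.isProbabilityMeasure
    | succ n ih =>
      refine ⟨?_⟩
      change ((iterK R n ξ).bind R) Set.univ = 1
      rw [Measure.bind_apply MeasurableSet.univ hRm.aemeasurable]
      simp
  have key := tendsto_integral_of_setwise (fun n => P.map (Zm (n+1))) π ?_ g hg h0 M hM
  · refine key.congr fun n => ?_
    rw [integral_map (hZm _).aemeasurable hg.aestronglyMeasurable]
  · intro B hB
    rw [tendsto_iff_norm_sub_tendsto_zero]
    have hz : Tendsto (fun n : ℕ => κ * (ρ⁻¹) ^ n) atTop (nhds 0) := by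
      have := (tendsto_pow_atTop_nhds_zero_of_lt_one (r := ρ⁻¹) (by positivity) (inv_lt_one_of_one_lt₀ hρ)).const_mul κ
      simpa using this
    refine squeeze_zero' (Eventually.of_forall fun n => norm_nonneg _) ?_ hz
    filter_upwards [eventually_ge_atTop 1] with n hn
    have hmb : Measurable fun ω => (iterK R n (Zm 1 ω)).real B :=
      (((Measure.measurable_coe hB).comp (measurable_iterK R hRm n)).comp (hZm 1)).ennreal_toReal
    have hib : Integrable (fun ω => (iterK R n (Zm 1 ω)).real B) P :=
      Integrable.of_bound hmb.aestronglyMeasurable 1 (ae_of_all _ fun ω => by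
        rw [Real.norm_eq_abs, abs_of_nonneg measureReal_nonneg]; exact measureReal_le_one)
    have h1 : (P.map (Zm (n+1))).real B = ∫ ω, (iterK R n (Zm 1 ω)).real B ∂P := by
      rw [Measure.real, hlaw n, Measure.bind_apply hB (measurable_iterK R hRm n).aemeasurable,
        lintegral_map (f := fun a => iterK R n a B) ((Measure.measurable_coe hB).comp (measurable_iterK R hRm n)) (hZm _)]
      rw [← integral_toReal]
      · rfl
      · exact (((Measure.measurable_coe hB).comp (measurable_iterK R hRm n)).comp (hZm 1)).aemeasurable
      · exact ae_of_all _ fun ω => measure_lt_top _ _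
    have h2 : (P.map (Zm (n+1))).real B - π.real B = ∫ ω, ((iterK R n (Zm 1 ω)).real B - π.real B) ∂P := by
      rw [integral_sub hib (integrable_const _), h1]; simp
    rw [h2]
    refine (norm_integral_le_of_norm_le_const (C := κ * (ρ⁻¹) ^ n) (ae_of_all _ fun ω => ?_)).trans (by simp)
    have := hTV n hn _ (hmem ω) B hB
    rw [Real.rpow_neg (by linarith), Real.rpow_natCast, ← inv_pow] at this
    exact this

theorem kernel_approx {V : Type*} [MeasurableSpace V] [NormedAddCommGroup V] (vol : Measure V)
    (K : V → ℝ) (hKm : Measurable K) (hK0 : ∀ z, 0 ≤ K z) (hK1 : ∫ z, K z ∂vol = 1) (δ : ℝ)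
    (hKs : Function.support K ⊆ Metric.ball 0 δ) (F : V → ℝ) (hF : Measurable F) (c η : ℝ)
    (h : ∀ s ∈ Metric.ball (0 : V) δ, |F s - c| ≤ η) :
    |∫ s, K s * F s ∂vol - c| ≤ η := by
  have hKi : Integrable K vol := by
    by_contra hn
    rw [integral_undef hn] at hK1; norm_num at hK1
  have hbd : ∀ s, ‖K s * F s - K s * c‖ ≤ K s * η := by
    intro s
    rw [← mul_sub, norm_mul, Real.norm_eq_abs, abs_of_nonneg (hK0 s), Real.norm_eq_abs]
    by_cases hs : K s = 0
    · simp [hs]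
    · exact mul_le_mul_of_nonneg_left (h s (hKs hs)) (hK0 s)
  have hdi : Integrable (fun s => K s * F s - K s * c) vol :=
    (hKi.mul_const η).mono' (by fun_prop) (ae_of_all _ hbd)
  have hKF : Integrable (fun s => K s * F s) vol := by
    refine (hdi.add (hKi.mul_const c)).congr (ae_of_all _ fun s => ?_)
    simp
  have e : ∫ s, K s * F s ∂vol - c = ∫ s, (K s * F s - K s * c) ∂vol := by
    rw [integral_sub hKF (hKi.mul_const c), integral_mul_const, hK1, one_mul]
  rw [e]
  refine (norm_integral_le_of_norm_le (hKi.mul_const η) (ae_of_all _ hbd)).trans ?_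
  rw [integral_mul_const, hK1, one_mul]

theorem kernel_cov {d : ℕ} (K f : EuclideanSpace ℝ (Fin d) → ℝ) (x : EuclideanSpace ℝ (Fin d)) (w : ℝ)
    (hw : 0 < w) :
    ∫ a, K (w⁻¹ • (a - x)) * f a = w ^ d * ∫ s, K s * f (x + w • s) := by
  have h1 := integral_sub_right_eq_self (μ := volume) (fun a => K (w⁻¹ • a) * f (x + a)) x
  have h2 := Measure.integral_comp_inv_smul (volume : Measure (EuclideanSpace ℝ (Fin d))) (fun s => K s * f (x + w • s)) w
  simp only [add_sub_cancel] at h1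
  rw [h1]
  simp only [smul_inv_smul₀ hw.ne', finrank_euclideanSpace, Fintype.card_fin, smul_eq_mul] at h2
  rw [h2, abs_of_pos (by positivity)]

theorem withDensity_integral_on {d : ℕ} (m : Measure (EuclideanSpace ℝ (Fin d)))
    (E : Set (EuclideanSpace ℝ (Fin d))) (hE : MeasurableSet E) (f : EuclideanSpace ℝ (Fin d) → ℝ)
    (hf : Measurable f) (hf0 : ∀ z, 0 ≤ f z)
    (h : ∀ B : Set (EuclideanSpace ℝ (Fin d)), B ⊆ E → MeasurableSet B →
      m B = ∫⁻ z in B, ENNReal.ofReal (f z))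
    (ψ : EuclideanSpace ℝ (Fin d) → ℝ) (hψ : ∀ z, z ∉ E → ψ z = 0) :
    ∫ z, ψ z ∂m = ∫ z, ψ z * f z := by
  have h1 : m.restrict E = (volume.restrict E).withDensity (fun z => ENNReal.ofReal (f z)) := by
    ext B hB
    rw [Measure.restrict_apply hB, withDensity_apply _ hB, Measure.restrict_restrict hB]
    exact h _ Set.inter_subset_right (hB.inter hE)
  rw [← setIntegral_eq_integral_of_forall_compl_eq_zero (s := E) (f := ψ) hψ, h1,
    integral_withDensity_eq_integral_toReal_smul hf.ennreal_ofReal (ae_of_all _ fun z => ENNReal.ofReal_lt_top),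
    ← setIntegral_eq_integral_of_forall_compl_eq_zero (s := E) (f := fun z => ψ z * f z) (fun z hz => by simp [hψ z hz])]
  refine integral_congr_ae (ae_of_all _ fun z => ?_)
  simp [ENNReal.toReal_ofReal (hf0 z), mul_comm]

theorem pull_out {Ω S : Type*} (m : MeasurableSpace Ω) {mΩ : MeasurableSpace Ω}
    [MeasurableSpace S] (P : Measure Ω) [IsProbabilityMeasure P] (hm : m ≤ mΩ) (X Y : Ω → S)
    (hX : Measurable[m] X) (hY : Measurable Y) (φ g : S → ℝ) (hφ : Measurable φ) (hg : Measurable g)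
    (Cφ Cg : ℝ) (hφb : ∀ u, |φ u| ≤ Cφ) (hgb : ∀ u, |g u| ≤ Cg) (Qm : S → Measure S)
    (h : P[fun ω => g (Y ω)|m] =ᵐ[P] fun ω => ∫ u, g u ∂(Qm (X ω))) :
    ∫ ω, φ (X ω) * g (Y ω) ∂P = ∫ ω, φ (X ω) * ∫ u, g u ∂(Qm (X ω)) ∂P := by
  have hX' : Measurable X := hX.mono hm le_rfl
  have h1 : Integrable (fun ω => g (Y ω)) P :=
    Integrable.of_bound (hg.comp hY).aestronglyMeasurable Cg (ae_of_all _ fun ω => hgb _)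
  have h2 : Integrable ((fun ω => φ (X ω)) * (fun ω => g (Y ω))) P :=
    h1.bdd_mul (hφ.comp hX').aestronglyMeasurable (ae_of_all _ fun ω => hφb _)
  have h3 := condExp_mul_of_stronglyMeasurable_left (m := m) (μ := P)
    (hφ.comp hX).stronglyMeasurable h2 h1
  calc ∫ ω, φ (X ω) * g (Y ω) ∂P = ∫ ω, (P[(fun ω => φ (X ω)) * (fun ω => g (Y ω))|m]) ω ∂P :=
        (integral_condExp hm).symm
    _ = _ := by
        refine integral_congr_ae ?_
        filter_upwards [h3, h] with ω h3 h4
        have : (P[(fun ω => φ (X ω)) * (fun ω => g (Y ω))|m]) ω = φ (X ω) * (P[fun ω => g (Y ω)|m]) ω := h3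
        rw [this, h4]

/-- The smoothed mean, as a purely analytic statement. -/
theorem analytic_mean {d : ℕ} (E : Set (EuclideanSpace ℝ (Fin d))) (hE : MeasurableSet E)
    (Rξ : Measure (EuclideanSpace ℝ (Fin d))) (rξ : EuclideanSpace ℝ (Fin d) → ℝ)
    (hrm : Measurable rξ) (hr0 : ∀ z, 0 ≤ rξ z) (Cr : ℝ) (hrb : ∀ z, rξ z ≤ Cr) (rLip : ℝ)
    (hrL : ∀ b ∈ E, ∀ b' ∈ E, |rξ b' - rξ b| ≤ rLip * dist b' b)
    (hRd : ∀ B : Set (EuclideanSpace ℝ (Fin d)), B ⊆ E → MeasurableSet B →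
      Rξ B = ∫⁻ z in B, ENNReal.ofReal (rξ z))
    (K : EuclideanSpace ℝ (Fin d) → ℝ) (hKmeas : Measurable K) (hKnonneg : ∀ z, 0 ≤ K z)
    (hKint : ∫ z, K z ∂volume = 1)
    (δ : ℝ) (hδ : 0 < δ) (hKsupp : Function.support K ⊆ Metric.ball 0 δ)
    (q : EuclideanSpace ℝ (Fin d) → EuclideanSpace ℝ (Fin d) → ℝ)
    (hqmeas : Measurable (Function.uncurry q)) (Cq : ℝ) (hq0 : ∀ a b, 0 ≤ q a b) (hqb : ∀ a b, q a b ≤ Cq)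
    (qLip : ℝ) (hqLip1 : ∀ a b b' : (EuclideanSpace ℝ (Fin d)), |q a b' - q a b| ≤ qLip * dist b' b)
    (hqLip2 : ∀ a a' b : (EuclideanSpace ℝ (Fin d)), |q a' b - q a b| ≤ qLip * dist a' a)
    (x y : EuclideanSpace ℝ (Fin d)) (w : ℝ) (hw : 0 < w) (hx : x ∈ E)
    (hball : Metric.ball x (w * δ) ⊆ E) :
    |(∫ a, (w ^ d)⁻¹ * K (w⁻¹ • (a - x)) * (∫ s, K s * q a (y + w • s)) ∂(Rξ)) - q x y * rξ x|
      ≤ (2 * |qLip| * Cr + Cq * |rLip|) * δ * w := by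
  have hsupp : ∀ z, K (w⁻¹ • (z - x)) ≠ 0 → z ∈ Metric.ball x (w * δ) := by
    intro z hz
    have := hKsupp hz
    rw [mem_ball_zero_iff, norm_smul, norm_inv, Real.norm_eq_abs, abs_of_pos hw,
      inv_mul_lt_iff₀ hw] at this
    rwa [mem_ball_iff_norm]
  have hbx : ∀ s ∈ Metric.ball (0 : EuclideanSpace ℝ (Fin d)) δ, dist (x + w • s) x ≤ w * δ ∧ x + w • s ∈ E := by
    intro s hs
    rw [mem_ball_zero_iff] at hs
    have : dist (x + w • s) x < w * δ := by
      rw [dist_eq_norm, add_sub_cancel_left, norm_smul, Real.norm_eq_abs, abs_of_pos hw]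
      gcongr
    exact ⟨this.le, hball this⟩
  set G : EuclideanSpace ℝ (Fin d) → ℝ := fun a => ∫ s, K s * q a (y + w • s) with hG
  have hGm : Measurable G := by
    have h1 : Measurable (Function.uncurry fun (a s : EuclideanSpace ℝ (Fin d)) => K s * q a (y + w • s)) := by
      refine (hKmeas.comp measurable_snd).mul ?_
      exact hqmeas.comp (measurable_fst.prodMk (measurable_const.add (measurable_snd.const_smul w)))
    exact h1.stronglyMeasurable.integral_prod_right.measurable
  have hqm : ∀ a, Measurable (fun s => q a (y + w • s)) := fun a =>
    hqmeas.comp (measurable_const.prodMk (measurable_const.add (measurable_id.const_smul w)))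
  have hG1 : ∀ a, |G a - q x y| ≤ |qLip| * (w * δ + dist a x) := by
    intro a
    refine kernel_approx volume K hKmeas hKnonneg hKint δ hKsupp _ (hqm a) _ _ fun s hs => ?_
    rw [mem_ball_zero_iff] at hs
    have h1 := hqLip1 a y (y + w • s)
    have h2 := hqLip2 x a y
    have h3 : dist (y + w • s) y ≤ w * δ := by
      rw [dist_eq_norm, add_sub_cancel_left, norm_smul, Real.norm_eq_abs, abs_of_pos hw]
      gcongr
    have h4 : qLip * dist (y + w • s) y ≤ |qLip| * (w * δ) :=
      mul_le_mul (le_abs_self _) h3 dist_nonneg (abs_nonneg _)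
    have h5 : qLip * dist a x ≤ |qLip| * dist a x :=
      mul_le_mul_of_nonneg_right (le_abs_self _) dist_nonneg
    have h6 := abs_sub_le (q a (y + w • s)) (q a y) (q x y)
    linarith
  have e1 : ∫ a, (w ^ d)⁻¹ * K (w⁻¹ • (a - x)) * G a ∂(Rξ) = ∫ s, K s * (G (x + w • s) * rξ (x + w • s)) := by
    rw [withDensity_integral_on Rξ E hE rξ hrm hr0 hRd]
    · have := kernel_cov K (fun a => G a * rξ a) x w hw
      simp only [mul_assoc]
      rw [integral_const_mul, this, inv_mul_cancel_left₀ (by positivity)]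
    · intro z hz
      have : K (w⁻¹ • (z - x)) = 0 := by
        by_contra hn
        exact hz (hball (hsupp z hn))
      simp [this]
  rw [e1]
  refine kernel_approx volume K hKmeas hKnonneg hKint δ hKsupp _ (by fun_prop) _ _ fun s hs => ?_
  obtain ⟨hd1, hE1⟩ := hbx s hs
  have h1 := hG1 (x + w • s)
  have h2 : |rξ (x + w • s) - rξ x| ≤ |rLip| * (w * δ) :=
    (hrL x hx _ hE1).trans (mul_le_mul (le_abs_self _) hd1 dist_nonneg (abs_nonneg _))
  have h3 : |G (x + w • s) - q x y| ≤ |qLip| * (2 * (w * δ)) :=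
    h1.trans (mul_le_mul_of_nonneg_left (by linarith) (abs_nonneg _))
  have e2 : G (x + w • s) * rξ (x + w • s) - q x y * rξ x =
    (G (x + w • s) - q x y) * rξ (x + w • s) + q x y * (rξ (x + w • s) - rξ x) := by ring
  rw [e2]
  refine (abs_add_le _ _).trans ?_
  rw [abs_mul, abs_mul, abs_of_nonneg (hr0 _), abs_of_nonneg (hq0 x y)]
  have h4 : |G (x + w • s) - q x y| * rξ (x + w • s) ≤ |qLip| * (2 * (w * δ)) * Cr :=
    mul_le_mul h3 (hrb _) (hr0 _) (by positivity)
  have h5 : q x y * |rξ (x + w • s) - rξ x| ≤ Cq * (|rLip| * (w * δ)) :=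
    mul_le_mul (hqb _ _) h2 (abs_nonneg _) ((hq0 x y).trans (hqb x y))
  linarith

theorem stmt3
    {d : ℕ} (hd : 1 ≤ d)
    {Ω : Type*} [MeasurableSpace Ω] (P : Measure Ω) [IsProbabilityMeasure P]
    (E : Set (EuclideanSpace ℝ (Fin d))) (hEopen : IsOpen E) (hEne : E.Nonempty)
    (Zm : ℕ → Ω → (EuclideanSpace ℝ (Fin d))) (hZmmeas : ∀ n, Measurable (Zm n))
    (hZmmem : ∀ n, 1 ≤ n → ∀ ω, Zm n ω ∈ closure E)
    (R : (EuclideanSpace ℝ (Fin d)) → Measure (EuclideanSpace ℝ (Fin d))) (hRprob : ∀ ξ, IsProbabilityMeasure (R ξ))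
    (hRkermeas : ∀ B : Set (EuclideanSpace ℝ (Fin d)), MeasurableSet B → Measurable fun ξ => R ξ B)
    (hMarkov : ∀ n, 1 ≤ n → ∀ g : (EuclideanSpace ℝ (Fin d)) → ℝ, Measurable g → (∃ C, ∀ u, |g u| ≤ C) →
      P[fun ω => g (Zm (n+1) ω)|⨆ i : Fin n, MeasurableSpace.comap (Zm (i.1+1)) inferInstance]
        =ᵐ[P] fun ω => ∫ u, g u ∂(R (Zm n ω)))
    (μ : Measure (EuclideanSpace ℝ (Fin d))) (hμprob : IsProbabilityMeasure μ)
    (ε : ℝ) (hε : 0 < ε) (k : ℕ) (hk : 1 ≤ k)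
    (hDoeblin : ∀ ξ ∈ closure E, ∀ B : Set (EuclideanSpace ℝ (Fin d)), MeasurableSet B →
      ENNReal.ofReal ε * μ B ≤ iterK R k ξ B)
    (π : Measure (EuclideanSpace ℝ (Fin d))) (hπprob : IsProbabilityMeasure π)
    (hπinv : ∀ B : Set (EuclideanSpace ℝ (Fin d)), MeasurableSet B → π B = ∫⁻ ξ, R ξ B ∂π)
    (κ ρ : ℝ) (hκ : 0 < κ) (hρ : 1 < ρ)
    (hTV : ∀ n : ℕ, 1 ≤ n → ∀ ξ ∈ closure E, ∀ B : Set (EuclideanSpace ℝ (Fin d)), MeasurableSet B →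
      |(iterK R n ξ B).toReal - (π B).toReal| ≤ κ * ρ ^ (-(n:ℝ)))
    (r : (EuclideanSpace ℝ (Fin d)) → (EuclideanSpace ℝ (Fin d)) → ℝ) (hrmeas : Measurable (Function.uncurry r)) (hrnonneg : ∀ a b, 0 ≤ r a b)
    (Cr : ℝ) (hrbdd : ∀ a b, r a b ≤ Cr)
    (rLip : ℝ) (hrLip : ∀ a : (EuclideanSpace ℝ (Fin d)), ∀ b ∈ E, ∀ b' ∈ E, |r a b' - r a b| ≤ rLip * dist b' b)
    (hRdens : ∀ ξ ∈ closure E, ∀ B : Set (EuclideanSpace ℝ (Fin d)), B ⊆ E → MeasurableSet B →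
      R ξ B = ∫⁻ z in B, ENNReal.ofReal (r ξ z) ∂volume)
    (p : (EuclideanSpace ℝ (Fin d)) → ℝ) (hp : ∀ z ∈ E, p z = ∫ u, r u z ∂π)
    (K : (EuclideanSpace ℝ (Fin d)) → ℝ) (hKmeas : Measurable K) (hKnonneg : ∀ z, 0 ≤ K z)
    (CK : ℝ) (hKbdd : ∀ z, K z ≤ CK) (hKint : ∫ z, K z ∂volume = 1)
    (δ : ℝ) (hδ : 0 < δ) (hKsupp : Function.support K ⊆ Metric.ball 0 δ)
    (Z : ℕ → Ω → (EuclideanSpace ℝ (Fin d))) (hZmeas : ∀ n, Measurable (Z n)) (hZmem : ∀ n, 1 ≤ n → ∀ ω, Z n ω ∈ E)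
    (Qm : (EuclideanSpace ℝ (Fin d)) → Measure (EuclideanSpace ℝ (Fin d))) (hQprob : ∀ ξ, IsProbabilityMeasure (Qm ξ))
    (q : (EuclideanSpace ℝ (Fin d)) → (EuclideanSpace ℝ (Fin d)) → ℝ) (hqmeas : Measurable (Function.uncurry q)) (hqnonneg : ∀ a b, 0 ≤ q a b)
    (Cq : ℝ) (hqbdd : ∀ a b, q a b ≤ Cq)
    (qLip : ℝ) (hqLip1 : ∀ a b b' : (EuclideanSpace ℝ (Fin d)), |q a b' - q a b| ≤ qLip * dist b' b)
    (hqLip2 : ∀ a a' b : (EuclideanSpace ℝ (Fin d)), |q a' b - q a b| ≤ qLip * dist a' a)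
    (hQdens : ∀ ξ : (EuclideanSpace ℝ (Fin d)), ∀ B : Set (EuclideanSpace ℝ (Fin d)), MeasurableSet B →
      Qm ξ B = ∫⁻ z in B, ENNReal.ofReal (q ξ z) ∂volume)
    (hZcond : ∀ n, 1 ≤ n → ∀ g : (EuclideanSpace ℝ (Fin d)) → ℝ, Measurable g → (∃ C, ∀ u, |g u| ≤ C) →
      P[fun ω => g (Z n ω)|(⨆ i : Fin n, MeasurableSpace.comap (Zm (i.1+1)) inferInstance) ⊔
          (⨆ i : Fin (n-1), MeasurableSpace.comap (Z (i.1+1)) inferInstance)]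
        =ᵐ[P] fun ω => ∫ u, g u ∂(Qm (Zm n ω)))
    (Bc bc : ℝ) (hBc : 0 < Bc) (hbc : 1 < bc)
    (hcov : ∀ g h : (EuclideanSpace ℝ (Fin d)) → (EuclideanSpace ℝ (Fin d)) → ℝ, Measurable (Function.uncurry g) → Measurable (Function.uncurry h) →
      (∀ a b, |g a b| ≤ 1) → (∀ a b, |h a b| ≤ 1) →
      ∀ m n : ℕ, 1 ≤ m → m ≤ n →
        |∫ ω, g (Zm m ω) (Z m ω) * h (Zm n ω) (Z n ω) ∂P -
          (∫ ω, g (Zm m ω) (Z m ω) ∂P) * (∫ ω, h (Zm n ω) (Z n ω) ∂P)| ≤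
          Bc * bc ^ (-((n:ℝ) - (m:ℝ))) * (1 + bc ^ (-(m:ℝ))))
    (w1 Beta : ℝ) (hw1 : 0 < w1) (hBeta : 0 < Beta)
    (w : ℕ → ℝ) (hw : ∀ j : ℕ, w j = w1 * (j:ℝ) ^ (-Beta))
    (x y : (EuclideanSpace ℝ (Fin d))) (hx : x ∈ E) (hy : y ∈ E)
    (hxdist : w1 * δ < Metric.infDist x (frontier E))
    (hydist : w1 * δ < Metric.infDist y (frontier E))
    (hβd : 8 * Beta * d < 1) :
    ∀ᵐ ω ∂P, Tendsto (fun n : ℕ => (n:ℝ)⁻¹ * ∑ j ∈ Finset.Icc 1 (n+1), ((w j) ^ (2*d))⁻¹ * (K ((w j)⁻¹ • (Zm j ω - x)) * K ((w j)⁻¹ • (Z j ω - y)))) atTop (nhds (p x * q x y)) := by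
  have hRm : Measurable R := Measure.measurable_of_measurable_coe _ hRkermeas
  have hstep := markov_step P Zm hZmmeas R hMarkov
  have hlaw := law_step P Zm hZmmeas R hRm hRprob hstep
  have hrsec : ∀ z, Measurable (fun u => r u z) := fun z => hrmeas.comp (measurable_id.prodMk measurable_const)
  have hlim := law_tendsto P Zm hZmmeas R hRm hRprob (closure E) (hZmmem 1 le_rfl) hlaw π κ ρ hκ hρ hTV
    (fun u => r u x) (hrsec x) (fun u => hrnonneg u x) Cr (fun u => hrbdd u x)
  rw [← hp x hx] at hlim
  have hCr0 : 0 ≤ Cr := (hrnonneg x x).trans (hrbdd x x)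
  have hCq0 : 0 ≤ Cq := (hqnonneg x x).trans (hqbdd x x)
  have hCK0 : 0 ≤ CK := (hKnonneg x).trans (hKbdd x)
  have hKabs : ∀ z, |K z| ≤ CK := fun z => by rw [abs_of_nonneg (hKnonneg z)]; exact hKbdd z
  have hwpos : ∀ j : ℕ, 1 ≤ j → 0 < w j := fun j hj => by
    rw [hw j]
    have : (0:ℝ) < j := by exact_mod_cast hj
    positivity
  have hwle : ∀ j : ℕ, 1 ≤ j → w j ≤ w1 := fun j hj => by
    rw [hw j]
    have : (1:ℝ) ≤ j := by exact_mod_cast hj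
    have := Real.rpow_le_one_of_one_le_of_nonpos this (by linarith : -Beta ≤ 0)
    nlinarith
  have hball : Metric.ball x (w1 * δ) ⊆ E := ball_subset_of_infDist E hEopen x hx _ (by positivity) hxdist
  -- the summands, shifted to start at index `0`
  set φ : ℕ → EuclideanSpace ℝ (Fin d) → EuclideanSpace ℝ (Fin d) → ℝ :=
    fun j a b => K ((w j)⁻¹ • (a - x)) * K ((w j)⁻¹ • (b - y)) with hφ
  have hKx : ∀ j (z : EuclideanSpace ℝ (Fin d)), Measurable fun a => K ((w j)⁻¹ • (a - z)) := fun j z =>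
    hKmeas.comp ((measurable_id.sub_const z).const_smul (w j)⁻¹)
  have hφm : ∀ j, Measurable (Function.uncurry (φ j)) := fun j =>
    ((hKx j x).comp measurable_fst).mul ((hKx j y).comp measurable_snd)
  have hφ0 : ∀ j a b, 0 ≤ φ j a b := fun j a b => mul_nonneg (hKnonneg _) (hKnonneg _)
  have hφb : ∀ j a b, φ j a b ≤ CK ^ 2 := fun j a b => by
    rw [sq]; exact mul_le_mul (hKbdd _) (hKbdd _) (hKnonneg _) hCK0
  set X : ℕ → Ω → ℝ := fun j ω => ((w j) ^ (2*d))⁻¹ * φ j (Zm j ω) (Z j ω) with hX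
  -- the mean
  have hmean : Tendsto (fun i => ∫ ω, X (i + 1) ω ∂P) atTop (nhds (p x * q x y)) := by
    set A := (2 * |qLip| * Cr + Cq * |rLip|) * δ with hA
    have hest : ∀ i, |∫ ω, X (i + 2) ω ∂P - q x y * ∫ ω, r (Zm (i + 1) ω) x ∂P| ≤ A * w (i + 2) := by
      intro i
      have hwp := hwpos (i + 2) (by omega)
      set v := w (i + 2) with hv
      have e1 : ∫ ω, X (i + 2) ω ∂P = (v ^ (2 * d))⁻¹ * ∫ ω, K (v⁻¹ • (Zm (i+2) ω - x)) * ∫ u, K (v⁻¹ • (u - y)) ∂(Qm (Zm (i+2) ω)) ∂P := by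
        simp only [hX, hφ]
        rw [integral_const_mul]
        congr 1
        refine pull_out _ P ?_ (Zm (i+2)) (Z (i+2)) ?_ (hZmeas _) (fun a => K (v⁻¹ • (a - x))) (fun b => K (v⁻¹ • (b - y)))
          (hKx (i+2) x) (hKx (i+2) y) CK CK (fun u => hKabs _) (fun u => hKabs _) Qm
          (hZcond (i+2) (by omega) (fun b => K (v⁻¹ • (b - y))) (hKx (i+2) y) ⟨CK, fun u => hKabs _⟩)
        · exact sup_le (iSup_le fun i => (hZmmeas _).comap_le) (iSup_le fun i => (hZmeas _).comap_le)
        · refine Measurable.mono (comap_measurable _) ?_ le_rfl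
          exact le_sup_of_le_left (le_iSup (fun j : Fin (i+2) => MeasurableSpace.comap (Zm (j.1+1)) inferInstance) ⟨i+1, by omega⟩)
      have e2 : ∀ a, ∫ u, K (v⁻¹ • (u - y)) ∂(Qm a) = v ^ d * ∫ s, K s * q a (y + v • s) := by
        intro a
        rw [withDensity_integral_on (Qm a) Set.univ MeasurableSet.univ (q a) (hqmeas.comp (measurable_const.prodMk measurable_id))
          (hqnonneg a) (fun B _ hB => hQdens a B hB) _ (fun z hz => absurd (Set.mem_univ z) hz), kernel_cov _ _ _ _ hwp]
      set G : EuclideanSpace ℝ (Fin d) → ℝ := fun a => ∫ s, K s * q a (y + v • s) with hG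
      have hGm : Measurable G := by
        have h1 : Measurable (Function.uncurry fun (a s : EuclideanSpace ℝ (Fin d)) => K s * q a (y + v • s)) := by
          refine (hKmeas.comp measurable_snd).mul ?_
          exact hqmeas.comp (measurable_fst.prodMk (measurable_const.add (measurable_snd.const_smul v)))
        exact h1.stronglyMeasurable.integral_prod_right.measurable
      have hGb : ∀ a, |G a| ≤ Cq := by
        intro a
        have := kernel_approx volume K hKmeas hKnonneg hKint δ hKsupp (fun s => q a (y + v • s))
          (hqmeas.comp (measurable_const.prodMk (measurable_const.add (measurable_id.const_smul v)))) 0 Cq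
          (fun s _ => by rw [sub_zero, abs_of_nonneg (hqnonneg _ _)]; exact hqbdd _ _)
        rwa [sub_zero] at this
      set ψ : EuclideanSpace ℝ (Fin d) → ℝ := fun a => (v ^ d)⁻¹ * K (v⁻¹ • (a - x)) * G a with hψ
      have hψm : Measurable ψ := ((hKx (i+2) x).const_mul _).mul hGm
      have hψb : ∀ a, |ψ a| ≤ (v ^ d)⁻¹ * CK * Cq := fun a => by
        simp only [hψ]
        rw [abs_mul, abs_mul, abs_of_pos (by positivity : 0 < (v ^ d)⁻¹)]
        have := hKabs (v⁻¹ • (a - x))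
        have := hGb a
        gcongr
      have e3 : ∫ ω, X (i + 2) ω ∂P = ∫ ω, ψ (Zm (i+2) ω) ∂P := by
        rw [e1, ← integral_const_mul]
        refine integral_congr_ae (ae_of_all _ fun ω => ?_)
        simp only [e2, hψ]
        rw [two_mul, pow_add]
        field_simp
        rfl
      rw [e3, hstep (i+1) (by omega) ψ hψm ⟨_, hψb⟩, ← integral_const_mul]
      have hbd : ∀ ω, ‖∫ u, ψ u ∂(R (Zm (i+1) ω)) - q x y * r (Zm (i+1) ω) x‖ ≤ A * v := by
        intro ω
        have hmem := hZmmem (i+1) (by omega) ω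
        exact analytic_mean E hEopen.measurableSet (R (Zm (i+1) ω)) (r (Zm (i+1) ω))
          (hrmeas.comp (measurable_const.prodMk measurable_id)) (hrnonneg _) Cr (hrbdd _) rLip (hrLip _) (hRdens _ hmem)
          K hKmeas hKnonneg hKint δ hδ hKsupp q hqmeas Cq hqnonneg hqbdd qLip hqLip1 hqLip2 x y v hwp hx
          ((Metric.ball_subset_ball (by have := hwle (i+2) (by omega); gcongr)).trans hball)
      rw [← integral_sub]
      · exact (norm_integral_le_of_norm_le_const (ae_of_all _ hbd)).trans (by simp)
      · have hkm : Measurable fun ξ => ∫ u, ψ u ∂(R ξ) :=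
          (hψm.stronglyMeasurable.integral_kernel (κ := (⟨R, hRm⟩ : Kernel _ _))).measurable
        refine Integrable.of_bound (hkm.comp (hZmmeas _)).aestronglyMeasurable ((v ^ d)⁻¹ * CK * Cq) (ae_of_all _ fun ω => ?_)
        have := hRprob (Zm (i+1) ω)
        exact (norm_integral_le_of_norm_le_const (ae_of_all _ hψb)).trans (by simp)
      · refine Integrable.const_mul (Integrable.of_bound ((hrsec x).comp (hZmmeas _)).aestronglyMeasurable Cr (ae_of_all _ fun ω => ?_)) _
        simp only [Function.comp]
        rw [Real.norm_eq_abs, abs_of_nonneg (hrnonneg _ _)]; exact hrbdd _ _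
    have hw0 : Tendsto (fun i => A * w (i + 2)) atTop (nhds 0) := by
      have h1 : Tendsto (fun j : ℕ => w1 * (j:ℝ) ^ (-Beta)) atTop (nhds (w1 * 0)) :=
        ((tendsto_rpow_neg_atTop hBeta).comp tendsto_natCast_atTop_atTop).const_mul w1
      have h2 := ((tendsto_add_atTop_iff_nat 2).2 h1).const_mul A
      simp only [mul_zero] at h2
      refine h2.congr fun i => ?_
      rw [hw (i+2)]
    have h1 : Tendsto (fun i => ∫ ω, X (i + 2) ω ∂P - q x y * ∫ ω, r (Zm (i + 1) ω) x ∂P) atTop (nhds 0) :=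
      squeeze_zero_norm hest hw0
    have h2 := h1.add (hlim.const_mul (q x y))
    simp only [sub_add_cancel, zero_add] at h2
    rw [mul_comm (p x)]
    exact (tendsto_add_atTop_iff_nat 1).1 h2
  -- the covariances
  set M := CK ^ 2 + 1 with hM
  have hMpos : 0 < M := by positivity
  set W := (w1 ^ (2*d))⁻¹ with hW
  have hWpos : 0 < W := by positivity
  have hwinv : ∀ j : ℕ, 1 ≤ j → ((w j) ^ (2*d))⁻¹ = W * (j:ℝ) ^ (2 * Beta * d) := by
    intro j hj
    have hj0 : (0:ℝ) < j := by exact_mod_cast hj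
    rw [hw j, mul_pow, mul_inv, hW, ← Real.rpow_natCast ((j:ℝ) ^ (-Beta)), ← Real.rpow_mul hj0.le, ← Real.rpow_neg hj0.le]
    congr 2
    push_cast
    ring
  have hcovX : ∀ m n, m ≤ n → |∫ ω, X (m+1) ω * X (n+1) ω ∂P - (∫ ω, X (m+1) ω ∂P) * (∫ ω, X (n+1) ω ∂P)| ≤
      (W ^ 2 * M ^ 2 * (2 * Bc)) * ((n : ℝ) + 1) ^ (4 * Beta * d) * (bc⁻¹) ^ (n - m) := by
    intro m n hmn
    have hdivm : ∀ j, Measurable (Function.uncurry fun a b => φ j a b / M) := fun j => (hφm j).div_const M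
    have hdivb : ∀ j a b, |φ j a b / M| ≤ 1 := fun j a b => by
      rw [abs_of_nonneg (div_nonneg (hφ0 j a b) hMpos.le), div_le_one hMpos]
      have := hφb j a b
      linarith
    have h1 := hcov _ _ (hdivm (m+1)) (hdivm (n+1)) (hdivb _) (hdivb _) (m+1) (n+1) (by omega) (by omega)
    set am := ((w (m+1)) ^ (2*d))⁻¹ with ham
    set an := ((w (n+1)) ^ (2*d))⁻¹ with han
    have ham0 : 0 < am := by have := hwpos (m+1) (by omega); positivity
    have han0 : 0 < an := by have := hwpos (n+1) (by omega); positivity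
    have e1 : ∫ ω, X (m+1) ω * X (n+1) ω ∂P - (∫ ω, X (m+1) ω ∂P) * (∫ ω, X (n+1) ω ∂P) =
        (am * an * M ^ 2) * (∫ ω, φ (m+1) (Zm (m+1) ω) (Z (m+1) ω) / M * (φ (n+1) (Zm (n+1) ω) (Z (n+1) ω) / M) ∂P -
          (∫ ω, φ (m+1) (Zm (m+1) ω) (Z (m+1) ω) / M ∂P) * (∫ ω, φ (n+1) (Zm (n+1) ω) (Z (n+1) ω) / M ∂P)) := by
      have e2 : ∀ j, ∫ ω, X j ω ∂P = ((w j) ^ (2*d))⁻¹ * M * ∫ ω, φ j (Zm j ω) (Z j ω) / M ∂P := by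
        intro j
        rw [← integral_const_mul]
        refine integral_congr_ae (ae_of_all _ fun ω => ?_)
        simp only [hX]; field_simp
      have e3 : ∫ ω, X (m+1) ω * X (n+1) ω ∂P = (am * an * M ^ 2) *
          ∫ ω, φ (m+1) (Zm (m+1) ω) (Z (m+1) ω) / M * (φ (n+1) (Zm (n+1) ω) (Z (n+1) ω) / M) ∂P := by
        rw [← integral_const_mul]
        refine integral_congr_ae (ae_of_all _ fun ω => ?_)
        simp only [hX, ← ham, ← han]; field_simp
      rw [e3, e2, e2]; ring
    rw [e1, abs_mul, abs_of_pos (by positivity)]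
    have hbc0 : 0 < bc := by linarith
    have h2 : bc ^ (-(((n+1 : ℕ):ℝ) - ((m+1 : ℕ):ℝ))) = (bc⁻¹) ^ (n - m) := by
      rw [show (((n+1 : ℕ):ℝ) - ((m+1 : ℕ):ℝ)) = ((n - m : ℕ) : ℝ) by rw [Nat.cast_sub hmn]; push_cast; ring,
        Real.rpow_neg hbc0.le, Real.rpow_natCast, inv_pow]
    have h3 : bc ^ (-((m+1 : ℕ):ℝ)) ≤ 1 :=
      Real.rpow_le_one_of_one_le_of_nonpos hbc.le (by simp only [Left.neg_nonpos_iff]; positivity)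
    rw [h2] at h1
    have hn0 : (0:ℝ) < (n:ℝ) + 1 := by positivity
    have h4 : am * an ≤ W ^ 2 * ((n:ℝ) + 1) ^ (4 * Beta * d) := by
      rw [ham, han, hwinv _ (by omega), hwinv _ (by omega)]
      have h5 : ((m+1 : ℕ):ℝ) ^ (2 * Beta * d) ≤ ((n:ℝ) + 1) ^ (2 * Beta * d) := by
        push_cast
        have : (m:ℝ) ≤ n := by exact_mod_cast hmn
        exact Real.rpow_le_rpow (by positivity) (by linarith) (by positivity)
      have h6 : ((n:ℝ) + 1) ^ (4 * Beta * d) = ((n:ℝ) + 1) ^ (2 * Beta * d) * ((n:ℝ) + 1) ^ (2 * Beta * d) := by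
        rw [← Real.rpow_add hn0]; congr 1; ring
      rw [h6]
      push_cast at h5 ⊢
      calc _ = W ^ 2 * (((m:ℝ) + 1) ^ (2 * Beta * d) * ((n:ℝ) + 1) ^ (2 * Beta * d)) := by ring
        _ ≤ _ := by gcongr
    have hbi : 0 ≤ (bc⁻¹) ^ (n - m) := by positivity
    calc _ ≤ (W ^ 2 * ((n:ℝ) + 1) ^ (4 * Beta * d) * M ^ 2) * (Bc * (bc⁻¹) ^ (n - m) * 2) := by
          refine mul_le_mul (by gcongr) (h1.trans ?_) (abs_nonneg _) (by positivity)
          gcongr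
          linarith
      _ = _ := by ring
  have hslln := slln_aux P (fun i => X (i+1))
    (fun i => ((hφm (i+1)).comp ((hZmmeas (i+1)).prodMk (hZmeas (i+1)))).const_mul _)
    (fun i ω => mul_nonneg (by have := hwpos (i+1) (by omega); positivity) (hφ0 _ _ _))
    (fun i => ⟨((w (i+1)) ^ (2*d))⁻¹ * CK ^ 2, fun ω =>
      mul_le_mul_of_nonneg_left (hφb _ _ _) (by have := hwpos (i+1) (by omega); positivity)⟩)
    (W ^ 2 * M ^ 2 * (2 * Bc)) (4 * Beta * d) bc⁻¹ (p x * q x y) (by positivity) (by positivity) (by linarith)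
    (by positivity) (inv_lt_one_of_one_lt₀ hbc) hcovX hmean
  filter_upwards [hslln] with ω hω
  have h1 := (tendsto_add_atTop_iff_nat 1).2 hω
  have h2 : Tendsto (fun n : ℕ => 1 + ((n:ℝ))⁻¹) atTop (nhds (1 + 0)) :=
    tendsto_const_nhds.add tendsto_inv_atTop_nhds_zero_nat
  have h3 := h1.mul h2
  simp only [add_zero, mul_one] at h3
  refine h3.congr' ?_
  filter_upwards [eventually_ge_atTop 1] with n hn
  have hn0 : (n:ℝ) ≠ 0 := by positivity
  have e : ∑ j ∈ Finset.Icc 1 (n+1), X j ω = ∑ i ∈ Finset.range (n+1), X (i+1) ω := by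
    rw [Finset.range_eq_Ico, Finset.sum_Ico_add' (fun j => X j ω) 0 (n+1) 1]
    rfl
  change _ = (n:ℝ)⁻¹ * ∑ j ∈ Finset.Icc 1 (n+1), X j ω
  rw [e]
  push_cast
  field_simp
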